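/- (Second unicity lemma for Needham–Schroeder–Lowe.) If evs ∈ nsl, Crypt (pubK B) ⟨Nonce NA, Agent A⟩ ∈ parts (spies evs) and Crypt (pubK B') ⟨Nonce NA', Nonce NA, Agent A'⟩ ∈ parts (spies evs), then Nonce NA ∈ analz (spies evs); i.e. the same nonce cannot occur both in first position of an NS1-shaped ciphertext and in second position of an NS2-shaped ciphertext unless it is known to the spy. -/

import Mathlib

inductive agent : Type
  | Server : agent
  | Friend : ℕ → agent
  | Spy : agent
deriving DecidableEq

inductive msg : Type
  | Agent : agent → msg
  | Number : ℕ → msg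
  | Nonce : ℕ → msg
  | Key : ℕ → msg
  | Hash : msg → msg
  | MPair : msg → msg → msg
  | Crypt : ℕ → msg → msg
deriving DecidableEq

inductive partsP (H : Set msg) : msg → Prop
  | Inj : ∀ X, X ∈ H → partsP H X
  | Fst : ∀ X Y, partsP H (msg.MPair X Y) → partsP H X
  | Snd : ∀ X Y, partsP H (msg.MPair X Y) → partsP H Y
  | Body : ∀ K X, partsP H (msg.Crypt K X) → partsP H X

/-- `parts H`: sub-components of messages of `H`. -/
def parts (H : Set msg) : Set msg := {X | partsP H X}

inductive analzP (invKey : ℕ → ℕ) (H : Set msg) : msg → Prop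
  | Inj : ∀ X, X ∈ H → analzP invKey H X
  | Fst : ∀ X Y, analzP invKey H (msg.MPair X Y) → analzP invKey H X
  | Snd : ∀ X Y, analzP invKey H (msg.MPair X Y) → analzP invKey H Y
  | Decrypt : ∀ K X, analzP invKey H (msg.Crypt K X) →
      analzP invKey H (msg.Key (invKey K)) → analzP invKey H X

/-- `analz invKey H`: what can be obtained by decomposing and decrypting messages of `H`. -/
def analz (invKey : ℕ → ℕ) (H : Set msg) : Set msg := {X | analzP invKey H X}

inductive synthP (H : Set msg) : msg → Prop
  | Inj : ∀ X, X ∈ H → synthP H X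
  | Ag : ∀ a, synthP H (msg.Agent a)
  | Num : ∀ n, synthP H (msg.Number n)
  | Hsh : ∀ X, synthP H X → synthP H (msg.Hash X)
  | Pr : ∀ X Y, synthP H X → synthP H Y → synthP H (msg.MPair X Y)
  | Cry : ∀ K X, synthP H X → msg.Key K ∈ H → synthP H (msg.Crypt K X)

/-- `synth H`: messages that can be synthesized from `H`. -/
def synth (H : Set msg) : Set msg := {X | synthP H X}

inductive guardP (invKey : ℕ → ℕ) (n : ℕ) (Ks : Set ℕ) : msg → Prop
  | No_Nonce : ∀ X, msg.Nonce n ∉ parts {X} → guardP invKey n Ks X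
  | Guard : ∀ K X, invKey K ∈ Ks → guardP invKey n Ks (msg.Crypt K X)
  | Cry : ∀ K X, guardP invKey n Ks X → guardP invKey n Ks (msg.Crypt K X)
  | Pr : ∀ X Y, guardP invKey n Ks X → guardP invKey n Ks Y →
      guardP invKey n Ks (msg.MPair X Y)

/-- `guard n Ks`: messages in which `Nonce n` is guarded by the keys of `Ks`. -/
def guardMsg (invKey : ℕ → ℕ) (n : ℕ) (Ks : Set ℕ) : Set msg := {X | guardP invKey n Ks X}

/-- `Guard n Ks H`: every message of `H` lies in `guard n Ks`. -/
def Guard (invKey : ℕ → ℕ) (n : ℕ) (Ks : Set ℕ) (H : Set msg) : Prop :=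
  ∀ X ∈ H, X ∈ guardMsg invKey n Ks
inductive event : Type
  | Says : agent → agent → msg → event
deriving DecidableEq

def msgOf : event → msg
  | event.Says _ _ X => X

/-- Set of messages sent in a trace. -/
def sent (evs : List event) : Set msg :=
  {X | ∃ A B, event.Says A B X ∈ evs}
/-- Private key of an agent: the inverse of its public key. -/
def priK (invKey : ℕ → ℕ) (pubK : agent → ℕ) (A : agent) : ℕ := invKey (pubK A)

/-- Initial knowledge of each agent in a public-key infrastructure:
every agent knows its own private key and all public keys; the spy moreover
knows the private keys of the bad agents. -/
def initStatePK (invKey : ℕ → ℕ) (pubK : agent → ℕ) (bad : Set agent) : agent → Set msg :=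
  fun A =>
    match A with
    | agent.Spy =>
        {X | ∃ B ∈ bad, X = msg.Key (priK invKey pubK B)} ∪ {X | ∃ B, X = msg.Key (pubK B)}
    | _ => {msg.Key (priK invKey pubK A)} ∪ {X | ∃ B, X = msg.Key (pubK B)}

/-- `spies evs`: the private keys of the bad agents, all public keys, and
every message sent in `evs`. -/
def spiesPK (invKey : ℕ → ℕ) (pubK : agent → ℕ) (bad : Set agent) (evs : List event) :
    Set msg :=
  initStatePK invKey pubK bad agent.Spy ∪ sent evs

/-- `used evs`: parts of all agents' initial knowledge and of all messages sent in `evs`. -/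
def usedPK (invKey : ℕ → ℕ) (pubK : agent → ℕ) (bad : Set agent) (evs : List event) :
    Set msg :=
  parts ((⋃ A, initStatePK invKey pubK bad A) ∪ sent evs)
/-- The Needham–Schroeder–Lowe protocol. -/
inductive nsl (invKey : ℕ → ℕ) (pubK : agent → ℕ) (bad : Set agent) : List event → Prop
  | Nil : nsl invKey pubK bad []
  | Fake : ∀ evs B X, nsl invKey pubK bad evs →
      X ∈ synth (analz invKey (spiesPK invKey pubK bad evs)) →
      nsl invKey pubK bad (event.Says agent.Spy B X :: evs)
  | NS1 : ∀ evs A B NA, nsl invKey pubK bad evs →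
      msg.Nonce NA ∉ usedPK invKey pubK bad evs →
      nsl invKey pubK bad
        (event.Says A B (msg.Crypt (pubK B) (msg.MPair (msg.Nonce NA) (msg.Agent A))) :: evs)
  | NS2 : ∀ evs A A' B NA NB, nsl invKey pubK bad evs →
      msg.Nonce NB ∉ usedPK invKey pubK bad evs →
      event.Says A' B (msg.Crypt (pubK B) (msg.MPair (msg.Nonce NA) (msg.Agent A))) ∈ evs →
      nsl invKey pubK bad
        (event.Says B A (msg.Crypt (pubK A)
          (msg.MPair (msg.Nonce NA) (msg.MPair (msg.Nonce NB) (msg.Agent B)))) :: evs)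
  | NS3 : ∀ evs A B B' NA NB, nsl invKey pubK bad evs →
      event.Says A B (msg.Crypt (pubK B) (msg.MPair (msg.Nonce NA) (msg.Agent A))) ∈ evs →
      event.Says B' A (msg.Crypt (pubK A)
        (msg.MPair (msg.Nonce NA) (msg.MPair (msg.Nonce NB) (msg.Agent B)))) ∈ evs →
      nsl invKey pubK bad (event.Says A B (msg.Crypt (pubK B) (msg.Nonce NB)) :: evs)

/-!
Follow the trace up to the first moment at which both ciphertexts are visible. If an honest agent
completes the pair, it does so by sending the one in which the nonce is freshly generated (the first
position for NS1, the second for NS2), so the other ciphertext cannot have been there already. If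
the spy completes it, then the spy built a ciphertext out of its body, and so already knew the
nonce.
-/

section Messages

open msg

variable {invKey : ℕ → ℕ} {G H : Set msg} {X Y : msg}

theorem subset_parts : H ⊆ parts H :=
  fun X hX => partsP.Inj X hX

theorem parts_subset_parts_iff : parts G ⊆ parts H ↔ G ⊆ parts H := by
  refine ⟨subset_parts.trans, fun hGH X hX => ?_⟩
  induction hX with
  | Inj _ hX => exact hGH hX
  | Fst X Y _ ih => exact partsP.Fst X Y ih
  | Snd X Y _ ih => exact partsP.Snd X Y ih
  | Body K X _ ih => exact partsP.Body K X ih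

theorem parts_mono : Monotone parts :=
  fun _ _ hGH => parts_subset_parts_iff.2 (hGH.trans subset_parts)

theorem parts_union (G H : Set msg) : parts (G ∪ H) = parts G ∪ parts H := by
  refine Set.Subset.antisymm (fun X hX => ?_)
    (Set.union_subset (parts_mono Set.subset_union_left) (parts_mono Set.subset_union_right))
  induction hX with
  | Inj _ hX => exact Set.union_subset_union subset_parts subset_parts hX
  | Fst X Y _ ih => exact ih.imp (partsP.Fst X Y) (partsP.Fst X Y)
  | Snd X Y _ ih => exact ih.imp (partsP.Snd X Y) (partsP.Snd X Y)
  | Body K X _ ih => exact ih.imp (partsP.Body K X) (partsP.Body K X)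

theorem parts_eq_self (hPair : ∀ X Y, MPair X Y ∉ H) (hCrypt : ∀ K X, Crypt K X ∉ H) :
    parts H = H := by
  refine Set.Subset.antisymm (fun X hX => ?_) subset_parts
  induction hX with
  | Inj _ hX => exact hX
  | Fst X Y _ ih => exact absurd ih (hPair X Y)
  | Snd X Y _ ih => exact absurd ih (hPair X Y)
  | Body K X _ ih => exact absurd ih (hCrypt K X)

@[simp]
theorem parts_singleton_agent (a : agent) : parts {Agent a} = {Agent a} :=
  parts_eq_self (by simp) (by simp)

@[simp]
theorem parts_singleton_nonce (n : ℕ) : parts {Nonce n} = {Nonce n} :=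
  parts_eq_self (by simp) (by simp)

@[simp]
theorem parts_singleton_mpair (X Y : msg) :
    parts {MPair X Y} = insert (MPair X Y) (parts {X} ∪ parts {Y}) := by
  have pair_mem : MPair X Y ∈ parts {MPair X Y} := subset_parts rfl
  refine Set.Subset.antisymm (fun Z hZ => ?_) (Set.insert_subset pair_mem (Set.union_subset
    (parts_subset_parts_iff.2 (Set.singleton_subset_iff.2 (partsP.Fst X Y pair_mem)))
    (parts_subset_parts_iff.2 (Set.singleton_subset_iff.2 (partsP.Snd X Y pair_mem)))))
  induction hZ with
  | Inj _ hZ => exact .inl hZ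
  | Fst U V _ ih =>
    obtain ⟨⟨⟩⟩ | ih := ih
    · exact .inr (.inl (subset_parts rfl))
    · exact .inr (ih.imp (partsP.Fst U V) (partsP.Fst U V))
  | Snd U V _ ih =>
    obtain ⟨⟨⟩⟩ | ih := ih
    · exact .inr (.inr (subset_parts rfl))
    · exact .inr (ih.imp (partsP.Snd U V) (partsP.Snd U V))
  | Body K U _ ih =>
    obtain ⟨⟨⟩⟩ | ih := ih
    exact .inr (ih.imp (partsP.Body K U) (partsP.Body K U))

@[simp]
theorem parts_singleton_crypt (K : ℕ) (X : msg) :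
    parts {Crypt K X} = insert (Crypt K X) (parts {X}) := by
  have crypt_mem : Crypt K X ∈ parts {Crypt K X} := subset_parts rfl
  refine Set.Subset.antisymm (fun Z hZ => ?_) (Set.insert_subset crypt_mem
    (parts_subset_parts_iff.2 (Set.singleton_subset_iff.2 (partsP.Body K X crypt_mem))))
  induction hZ with
  | Inj _ hZ => exact .inl hZ
  | Fst U V _ ih =>
    obtain ⟨⟨⟩⟩ | ih := ih
    exact .inr (partsP.Fst U V ih)
  | Snd U V _ ih =>
    obtain ⟨⟨⟩⟩ | ih := ih
    exact .inr (partsP.Snd U V ih)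
  | Body L U _ ih =>
    obtain ⟨⟨⟩⟩ | ih := ih
    · exact .inr (subset_parts rfl)
    · exact .inr (partsP.Body L U ih)

theorem analz_mono : Monotone (analz invKey) := by
  intro G H hGH X hX
  induction hX with
  | Inj X hX => exact analzP.Inj X (hGH hX)
  | Fst X Y _ ih => exact analzP.Fst X Y ih
  | Snd X Y _ ih => exact analzP.Snd X Y ih
  | Decrypt K X _ _ ihCrypt ihKey => exact analzP.Decrypt K X ihCrypt ihKey

theorem subset_analz : H ⊆ analz invKey H :=
  fun X hX => analzP.Inj X hX

theorem analz_subset_parts : analz invKey H ⊆ parts H := by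
  intro X hX
  induction hX with
  | Inj _ hX => exact subset_parts hX
  | Fst X Y _ ih => exact partsP.Fst X Y ih
  | Snd X Y _ ih => exact partsP.Snd X Y ih
  | Decrypt K X _ _ ih _ => exact partsP.Body K X ih

theorem parts_analz : parts (analz invKey H) = parts H :=
  (parts_subset_parts_iff.2 analz_subset_parts).antisymm (parts_mono subset_analz)

theorem subset_synth : H ⊆ synth H :=
  fun X hX => synthP.Inj X hX

theorem nonce_mem_synth_iff {n : ℕ} : Nonce n ∈ synth H ↔ Nonce n ∈ H :=
  ⟨fun | .Inj _ h => h, fun h => subset_synth h⟩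

theorem mpair_mem_synth_iff :
    MPair X Y ∈ synth H ↔ MPair X Y ∈ H ∨ X ∈ synth H ∧ Y ∈ synth H where
  mp
    | .Inj _ h => .inl h
    | .Pr _ _ hX hY => .inr ⟨hX, hY⟩
  mpr h := h.elim (fun h => subset_synth h) fun ⟨hX, hY⟩ => synthP.Pr X Y hX hY

theorem crypt_mem_synth_iff {K : ℕ} :
    Crypt K X ∈ synth H ↔ Crypt K X ∈ H ∨ X ∈ synth H ∧ Key K ∈ H where
  mp
    | .Inj _ h => .inl h
    | .Cry _ _ hX hK => .inr ⟨hX, hK⟩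
  mpr h := h.elim (fun h => subset_synth h) fun ⟨hX, hK⟩ => synthP.Cry K X hX hK

theorem mpair_mem_synth_analz_iff :
    MPair X Y ∈ synth (analz invKey H) ↔
      X ∈ synth (analz invKey H) ∧ Y ∈ synth (analz invKey H) := by
  rw [mpair_mem_synth_iff, or_iff_right_of_imp]
  exact fun h => ⟨subset_synth (analzP.Fst X Y h), subset_synth (analzP.Snd X Y h)⟩

theorem parts_synth : parts (synth H) = parts H ∪ synth H := by
  refine Set.Subset.antisymm (fun X hX => ?_)
    (Set.union_subset (parts_mono subset_synth) subset_parts)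
  induction hX with
  | Inj _ hX => exact .inr hX
  | Fst X Y _ ih =>
    obtain hPart | hSynth := ih
    · exact .inl (partsP.Fst X Y hPart)
    · exact (mpair_mem_synth_iff.1 hSynth).imp (fun h => partsP.Fst X Y (subset_parts h)) And.left
  | Snd X Y _ ih =>
    obtain hPart | hSynth := ih
    · exact .inl (partsP.Snd X Y hPart)
    · exact (mpair_mem_synth_iff.1 hSynth).imp (fun h => partsP.Snd X Y (subset_parts h)) And.right
  | Body K X _ ih =>
    obtain hPart | hSynth := ih
    · exact .inl (partsP.Body K X hPart)
    · exact (crypt_mem_synth_iff.1 hSynth).imp (fun h => partsP.Body K X (subset_parts h)) And.left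

theorem parts_singleton_subset_of_mem_synth_analz (hX : X ∈ synth (analz invKey H)) :
    parts {X} ⊆ parts H ∪ synth (analz invKey H) :=
  calc
    parts {X} ⊆ parts (synth (analz invKey H)) := parts_mono (Set.singleton_subset_iff.2 hX)
    _ = parts H ∪ synth (analz invKey H) := by rw [parts_synth, parts_analz]

theorem crypt_mem_parts_or_body_mem_synth {K : ℕ} (hX : X ∈ synth (analz invKey H))
    (hCrypt : Crypt K Y ∈ parts {X}) :
    Crypt K Y ∈ parts H ∨ Y ∈ synth (analz invKey H) := by
  obtain hPart | hSynth := parts_singleton_subset_of_mem_synth_analz hX hCrypt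
  · exact .inl hPart
  · exact (crypt_mem_synth_iff.1 hSynth).imp (fun h => analz_subset_parts h) And.left

end Messages

section Traces

open msg

variable {invKey : ℕ → ℕ} {pubK : agent → ℕ} {bad : Set agent} {evs : List event}

theorem initStatePK_subset_range_key (A : agent) :
    initStatePK invKey pubK bad A ⊆ Set.range Key := by
  cases A <;> grind [initStatePK]

theorem spiesPK_nil : spiesPK invKey pubK bad [] = initStatePK invKey pubK bad agent.Spy := by
  simp [spiesPK, sent]

theorem spiesPK_cons (A B : agent) (X : msg) (evs : List event) :
    spiesPK invKey pubK bad (event.Says A B X :: evs) =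
      insert X (spiesPK invKey pubK bad evs) := by
  ext Y
  simp only [spiesPK, sent, Set.mem_union, Set.mem_ofPred_eq, Set.mem_insert_iff, List.mem_cons,
    event.Says.injEq]
  grind

theorem mem_parts_spiesPK_cons {A B : agent} {X Y : msg} :
    Y ∈ parts (spiesPK invKey pubK bad (event.Says A B X :: evs)) ↔
      Y ∈ parts {X} ∨ Y ∈ parts (spiesPK invKey pubK bad evs) := by
  rw [spiesPK_cons, Set.insert_eq, parts_union, Set.mem_union]

theorem analz_spiesPK_subset_cons (A B : agent) (X : msg) (evs : List event) :
    analz invKey (spiesPK invKey pubK bad evs) ⊆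
      analz invKey (spiesPK invKey pubK bad (event.Says A B X :: evs)) :=
  analz_mono (spiesPK_cons A B X evs ▸ Set.subset_insert _ _)

theorem crypt_notMem_parts_spiesPK_nil (K : ℕ) (X : msg) :
    Crypt K X ∉ parts (spiesPK invKey pubK bad []) := by
  have notMem_init : ∀ Y ∉ Set.range Key, Y ∉ initStatePK invKey pubK bad agent.Spy :=
    fun _ hY hInit => hY (initStatePK_subset_range_key _ hInit)
  rw [spiesPK_nil, parts_eq_self (fun _ _ => notMem_init _ (by simp))
    (fun _ _ => notMem_init _ (by simp))]
  exact notMem_init _ (by simp)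

theorem parts_spiesPK_subset_usedPK :
    parts (spiesPK invKey pubK bad evs) ⊆ usedPK invKey pubK bad evs :=
  parts_mono (Set.union_subset_union_left _ (Set.subset_iUnion _ agent.Spy))

theorem nsl_unicity2_general {A A' : agent} {K K' NA NA' : ℕ} (hevs : nsl invKey pubK bad evs)
    (h1 : Crypt K (MPair (Nonce NA) (Agent A)) ∈ parts (spiesPK invKey pubK bad evs))
    (h2 : Crypt K' (MPair (Nonce NA') (MPair (Nonce NA) (Agent A'))) ∈
      parts (spiesPK invKey pubK bad evs)) :
    Nonce NA ∈ analz invKey (spiesPK invKey pubK bad evs) := by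
  induction hevs with
  | Nil => exact absurd h1 (crypt_notMem_parts_spiesPK_nil _ _)
  | Fake evs C X _ hX ih =>
    apply analz_spiesPK_subset_cons
    rw [mem_parts_spiesPK_cons] at h1 h2
    obtain h1 | body1 := h1.elim (crypt_mem_parts_or_body_mem_synth hX) .inl
    · obtain h2 | body2 := h2.elim (crypt_mem_parts_or_body_mem_synth hX) .inl
      · exact ih h1 h2
      · exact nonce_mem_synth_iff.1
          (mpair_mem_synth_analz_iff.1 (mpair_mem_synth_analz_iff.1 body2).2).1
    · exact nonce_mem_synth_iff.1 (mpair_mem_synth_analz_iff.1 body1).1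
  | NS1 evs C D N _ fresh ih =>
    apply analz_spiesPK_subset_cons
    replace h2 := (mem_parts_spiesPK_cons.1 h2).resolve_left (by simp)
    obtain hNew | h1 := mem_parts_spiesPK_cons.1 h1
    · obtain ⟨-, rfl, -⟩ : K = pubK D ∧ NA = N ∧ A = C := by simpa using hNew
      exact absurd (parts_spiesPK_subset_usedPK (.Fst _ _ (.Snd _ _ (.Body _ _ h2)))) fresh
    · exact ih h1 h2
  | NS2 evs C _ D M N _ fresh _ ih =>
    apply analz_spiesPK_subset_cons
    replace h1 := (mem_parts_spiesPK_cons.1 h1).resolve_left (by simp)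
    obtain hNew | h2 := mem_parts_spiesPK_cons.1 h2
    · obtain ⟨-, -, rfl, -⟩ : K' = pubK C ∧ NA' = M ∧ NA = N ∧ A' = D := by simpa using hNew
      exact absurd (parts_spiesPK_subset_usedPK (.Fst _ _ (.Body _ _ h1))) fresh
    · exact ih h1 h2
  | NS3 evs C D _ _ N _ _ _ ih =>
    apply analz_spiesPK_subset_cons
    exact ih ((mem_parts_spiesPK_cons.1 h1).resolve_left (by simp))
      ((mem_parts_spiesPK_cons.1 h2).resolve_left (by simp))

end Traces

/-- Second unicity lemma for Needham–Schroeder–Lowe. -/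
theorem nsl_unicity2
    (invKey : ℕ → ℕ) (pubK : agent → ℕ) (bad : Set agent)
    (hinv : ∀ K, invKey (invKey K) = K)
    (hpub : Function.Injective pubK)
    (hpri : Function.Injective (priK invKey pubK))
    (hpubpri : ∀ A B : agent, pubK A ≠ priK invKey pubK B)
    (hspy : agent.Spy ∈ bad)
    (evs : List event) (A A' B B' : agent) (NA NA' : ℕ)
    (hevs : nsl invKey pubK bad evs)
    (h1 : msg.Crypt (pubK B) (msg.MPair (msg.Nonce NA) (msg.Agent A))
      ∈ parts (spiesPK invKey pubK bad evs))
    (h2 : msg.Crypt (pubK B') (msg.MPair (msg.Nonce NA') (msg.MPair (msg.Nonce NA) (msg.Agent A')))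
      ∈ parts (spiesPK invKey pubK bad evs)) :
    msg.Nonce NA ∈ analz invKey (spiesPK invKey pubK bad evs) :=
  nsl_unicity2_general hevs h1 h2
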